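/- arXiv:2407.07549 — 7 statements merged into one kernel-verified Lean document; each statement's English description precedes it below -/
import Mathlib

section
/- Let (X,d) and (Y,ρ) be metric spaces, let F be a family (an upward hereditary collection) of subsets of ℕ, and let g : X → Y be a homeomorphism such that g⁻¹ is uniformly continuous on Y. If f : X → X is a continuous map that is positively F-expansive, then h = g ∘ f ∘ g⁻¹ : Y → Y is positively F-expansive. -/
/-- `N_f(x,y,δ) = {n ∈ ℕ, n ≥ 1 : d(fⁿ x, fⁿ y) > δ}`. -/
def posNset {X : Type*} [MetricSpace X] (f : X → X) (x y : X) (δ : ℝ) : Set ℕ :=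
  {n : ℕ | 1 ≤ n ∧ δ < dist (f^[n] x) (f^[n] y)}

theorem stmt_4 {X Y : Type*} [MetricSpace X] [MetricSpace Y]
    (F : Set (Set ℕ)) (hF : ∀ B ∈ F, ∀ C : Set ℕ, B ⊆ C → C ∈ F)
    (g : X ≃ₜ Y) (hg : UniformContinuous (g.symm : Y → X))
    (f : X → X) (hf : Continuous f)
    (hexp : ∃ δ > (0 : ℝ), ∀ x y : X, x ≠ y → posNset f x y δ ∈ F) :
    ∃ η > (0 : ℝ), ∀ x y : Y, x ≠ y →
      posNset (⇑g ∘ f ∘ ⇑g.symm) x y η ∈ F := by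
  obtain ⟨δ, hδ, hexp⟩ := hexp
  obtain ⟨ε, hε, hunif⟩ := Metric.uniformContinuous_iff.mp hg δ hδ
  have hconj : Function.Semiconj g.symm (⇑g ∘ f ∘ ⇑g.symm) f := fun y => by simp
  refine ⟨ε / 2, half_pos hε, fun x y hxy =>
    hF _ (hexp (g.symm x) (g.symm y) (g.symm.injective.ne hxy)) _ ?_⟩
  rintro n ⟨hn, hdist⟩
  refine ⟨hn, ?_⟩
  by_contra! hle
  have hlt := hunif (hle.trans_lt (half_lt_self hε))
  rw [(hconj.iterate_right n).eq, (hconj.iterate_right n).eq] at hlt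
  exact hlt.not_gt hdist
end

section
/- Let (X,d) and (Y,ρ) be metric spaces, let F be a family (an upward hereditary collection) of subsets of ℕ, and let f : X → X and g : Y → Y be continuous maps. Equip X × Y with the metric D((x₁,x₂),(y₁,y₂)) = max{d(x₁,y₁), ρ(x₂,y₂)}. Then the product map f × g : X × Y → X × Y is positively F-expansive if and only if both f and g are positively F-expansive. -/
theorem posNset_prodMap {X Y : Type*} [MetricSpace X] [MetricSpace Y] (f : X → X) (g : Y → Y)
    (p q : X × Y) (δ : ℝ) :
    posNset (Prod.map f g) p q δ = posNset f p.1 q.1 δ ∪ posNset g p.2 q.2 δ := by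
  ext n
  simp only [posNset, Prod.map_iterate, Prod.dist_eq, Prod.map_fst, Prod.map_snd, lt_max_iff,
    Set.mem_union, Set.mem_ofPred_eq, and_or_left]

theorem posNset_anti {X : Type*} [MetricSpace X] (f : X → X) (x y : X) :
    Antitone (posNset f x y) :=
  fun _ _ h _ hn => ⟨hn.1, h.trans_lt hn.2⟩

theorem posNset_self {X : Type*} [MetricSpace X] (f : X → X) (x : X) {δ : ℝ} (hδ : 0 ≤ δ) :
    posNset f x x δ = ∅ := by
  ext n
  simp [posNset, hδ]

/- Note: the product `X × Y` carries Mathlib's sup metric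
`dist (x₁,x₂) (y₁,y₂) = max (dist x₁ y₁) (dist x₂ y₂)`. -/
theorem stmt_5 {X Y : Type*} [MetricSpace X] [MetricSpace Y] [Nonempty X] [Nonempty Y]
    (F : Set (Set ℕ)) (hF : ∀ B ∈ F, ∀ C : Set ℕ, B ⊆ C → C ∈ F)
    (f : X → X) (g : Y → Y) (hf : Continuous f) (hg : Continuous g) :
    (∃ δ > (0 : ℝ), ∀ p q : X × Y, p ≠ q → posNset (Prod.map f g) p q δ ∈ F) ↔
      ((∃ δ > (0 : ℝ), ∀ x y : X, x ≠ y → posNset f x y δ ∈ F) ∧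
        (∃ δ > (0 : ℝ), ∀ x y : Y, x ≠ y → posNset g x y δ ∈ F)) := by
  simp only [posNset_prodMap]
  constructor
  · rintro ⟨δ, hδ, h⟩
    obtain ⟨x₀⟩ := ‹Nonempty X›
    obtain ⟨y₀⟩ := ‹Nonempty Y›
    refine ⟨⟨δ, hδ, fun x y hxy => ?_⟩, ⟨δ, hδ, fun x y hxy => ?_⟩⟩
    · simpa [posNset_self g y₀ hδ.le] using h (x, y₀) (y, y₀) (by simpa using hxy)
    · simpa [posNset_self f x₀ hδ.le] using h (x₀, x) (x₀, y) (by simpa using hxy)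
  · rintro ⟨⟨δ, hδ, h⟩, ⟨ε, hε, k⟩⟩
    refine ⟨min δ ε, lt_min hδ hε, fun p q hpq => ?_⟩
    by_cases hx : p.1 = q.1
    · have hy : p.2 ≠ q.2 := fun hy => hpq (Prod.ext hx hy)
      exact hF _ (k _ _ hy) _
        ((posNset_anti g _ _ (min_le_right δ ε)).trans Set.subset_union_right)
    · exact hF _ (h _ _ hx) _
        ((posNset_anti f _ _ (min_le_left δ ε)).trans Set.subset_union_left)
end

section
/- Let (X,d) be a metric space and f : X → X a uniformly continuous map. If f is positively F_t-expansive, then for every m ∈ ℕ with m ≥ 1 the iterate f^m is positively F_t-expansive. -/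
/-- `A ⊆ ℕ` is thick: it contains blocks of consecutive integers of arbitrary length. -/
def IsThickNat (A : Set ℕ) : Prop :=
  ∀ k : ℕ, ∃ a : ℕ, ∀ i ≤ k, a + i ∈ A

/-- If `A` is thick, then so is the set of `n ≥ 1` with `m * n ∈ A`. -/
theorem IsThickNat.mul_preimage {A : Set ℕ} (hA : IsThickNat A) {m : ℕ} (hm : 1 ≤ m) :
    IsThickNat {n : ℕ | 1 ≤ n ∧ m * n ∈ A} := by
  intro k
  obtain ⟨a, ha⟩ := hA (m * (k + 1))
  refine ⟨a / m + 1, fun i hi => ⟨Nat.le_add_right_of_le (Nat.le_add_left 1 _), ?_⟩⟩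
  have hdiv := Nat.div_add_mod a m
  have hmod := Nat.mod_lt a hm
  have hik : m * i ≤ m * k := Nat.mul_le_mul_left m hi
  have hmem := ha (m * (a / m + 1 + i) - a) (by rw [mul_add, mul_add, mul_add]; omega)
  rwa [Nat.add_sub_cancel' (by rw [mul_add, mul_add]; omega)] at hmem

theorem stmt_7 {X : Type*} [MetricSpace X] (f : X → X) (hf : UniformContinuous f)
    (hexp : ∃ δ > (0 : ℝ), ∀ x y : X, x ≠ y → IsThickNat (posNset f x y δ)) :
    ∀ m : ℕ, 1 ≤ m →
      ∃ η > (0 : ℝ), ∀ x y : X, x ≠ y → IsThickNat (posNset f^[m] x y η) := by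
  obtain ⟨δ, hδ, hthick⟩ := hexp
  intro m hm
  refine ⟨δ, hδ, fun x y hxy k => ?_⟩
  obtain ⟨b, hb⟩ := (hthick x y hxy).mul_preimage hm k
  refine ⟨b, fun i hi => ⟨(hb i hi).1, ?_⟩⟩
  rw [← Function.iterate_mul]
  exact (hb i hi).2.2
end

section
/- Let (X,d) be a metric space, let m ∈ ℕ with m ≥ 1, and let f : X → X be a uniformly continuous map. If the iterate f^m is positively F_t-expansive, then f is positively F_t-expansive. -/
/-- Finitely many iterates of a uniformly continuous map share a modulus of continuity. -/
theorem UniformContinuous.exists_forall_iterate_dist_lt {X : Type*} [PseudoMetricSpace X]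
    {f : X → X} (hf : UniformContinuous f) {ε : ℝ} (hε : 0 < ε) (m : ℕ) :
    ∃ η > 0, ∀ j ≤ m, ∀ x y : X, dist x y < η → dist (f^[j] x) (f^[j] y) < ε := by
  have hη : ∀ᶠ η in nhdsWithin (0 : ℝ) (Set.Ioi 0), ∀ j ∈ Set.Iic m, ∀ x y : X,
      dist x y < η → dist (f^[j] x) (f^[j] y) < ε := by
    rw [Filter.eventually_all_finite (Set.finite_Iic m)]
    intro j _
    obtain ⟨η, hη, h⟩ := Metric.uniformContinuous_iff.1 (UniformContinuous.iterate f j hf) ε hε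
    filter_upwards [Ioo_mem_nhdsGT hη] with t ht x y hxy
    exact h (hxy.trans ht.2)
  obtain ⟨η, h, hpos⟩ := (hη.and self_mem_nhdsWithin).exists
  exact ⟨η, hpos, h⟩

theorem stmt_8 {X : Type*} [MetricSpace X] (m : ℕ) (hm : 1 ≤ m)
    (f : X → X) (hf : UniformContinuous f)
    (hexp : ∃ δ > (0 : ℝ), ∀ x y : X, x ≠ y → IsThickNat (posNset f^[m] x y δ)) :
    ∃ η > (0 : ℝ), ∀ x y : X, x ≠ y → IsThickNat (posNset f x y η) := by
  obtain ⟨δ, hδ, hthick⟩ := hexp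
  obtain ⟨η, hη, hmod⟩ := hf.exists_forall_iterate_dist_lt hδ m
  refine ⟨η / 2, half_pos hη, fun x y hxy k => ?_⟩
  obtain ⟨a, ha⟩ := hthick x y hxy (k + 1)
  have ha_pos : 1 ≤ a := (ha 0 (Nat.zero_le _)).1
  refine ⟨m * a, fun i hi => ⟨le_add_right (Nat.mul_pos hm ha_pos), ?_⟩⟩
  by_contra! hle
  have hdiv : i / m ≤ k := (Nat.div_le_self i m).trans hi
  have hfar := (ha (i / m + 1) (by omega)).2
  have hrem : i % m < m := Nat.mod_lt i hm
  have htime : m * (a + (i / m + 1)) = (m - i % m) + (m * a + i) := by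
    have hi_eq := Nat.div_add_mod i m
    rw [mul_add, mul_add, mul_one]
    omega
  rw [← Function.iterate_mul, htime, Function.iterate_add_apply f _ _ x,
    Function.iterate_add_apply f _ _ y] at hfar
  exact hfar.not_gt (hmod _ (Nat.sub_le _ _) _ _ (hle.trans_lt (half_lt_self hη)))
end

section
/- Let (X,d) be a compact metric space, f : X → X a continuous map, and F a family (an upward hereditary collection) of subsets of ℕ. If f is positively F-expansive, then f has an F*-generator, where F* = {A ⊆ ℕ : A ∩ B ≠ ∅ for all B ∈ F} is the dual family of F. -/
/-- The dual family `F* = {A ⊆ ℕ : A ∩ B ≠ ∅ for all B ∈ F}`. -/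
def dualFamily (F : Set (Set ℕ)) : Set (Set ℕ) :=
  {A : Set ℕ | ∀ B ∈ F, (A ∩ B).Nonempty}

/-- `U` is a finite open cover of `X` which is a `G`-generator for `f`: for every
sequence `(Aₙ)` of members of `U` and every `S ∈ G`, `⋂_{n ∈ S} f⁻ⁿ(cl Aₙ)`
contains at most one point. -/
def IsGenerator {X : Type*} [MetricSpace X] (f : X → X) (G : Set (Set ℕ))
    (U : Set (Set X)) : Prop :=
  U.Finite ∧ (∀ A ∈ U, IsOpen A) ∧ ⋃₀ U = Set.univ ∧
    ∀ A : ℕ → Set X, (∀ n : ℕ, A n ∈ U) → ∀ S ∈ G,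
      (⋂ n ∈ S, f^[n] ⁻¹' closure (A n)).Subsingleton

theorem stmt_11 {X : Type*} [MetricSpace X] [CompactSpace X] (f : X → X)
    (hf : Continuous f)
    (F : Set (Set ℕ)) (hF : ∀ B ∈ F, ∀ C : Set ℕ, B ⊆ C → C ∈ F)
    (hexp : ∃ δ > (0 : ℝ), ∀ x y : X, x ≠ y → posNset f x y δ ∈ F) :
    ∃ U : Set (Set X), IsGenerator f (dualFamily F) U := by
  obtain ⟨δ, hδ, hexp⟩ := hexp
  obtain ⟨t, -, ht, hcover⟩ := finite_cover_balls_of_compact (isCompact_univ (X := X)) (half_pos hδ)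
  refine ⟨(fun x => Metric.ball x (δ / 2)) '' t, ht.image _, ?_, ?_, ?_⟩
  · rintro _ ⟨x, -, rfl⟩
    exact Metric.isOpen_ball
  · rw [Set.sUnion_image]
    exact Set.univ_subset_iff.mp hcover
  · intro A hA S hS x hx y hy
    by_contra hxy
    obtain ⟨n, hnS, -, hn⟩ := hS _ (hexp x y hxy)
    obtain ⟨c, -, hc⟩ := hA n
    have mem_closedBall : ∀ z ∈ ⋂ n ∈ S, f^[n] ⁻¹' closure (A n), dist (f^[n] z) c ≤ δ / 2 := by
      intro z hz
      have hz' : f^[n] z ∈ closure (A n) := Set.mem_iInter₂.mp hz n hnS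
      rw [← hc] at hz'
      exact Metric.closure_ball_subset_closedBall hz'
    have := dist_triangle_right (f^[n] x) (f^[n] y) c
    linarith [mem_closedBall x hx, mem_closedBall y hy]
end

section
/- Let (X,d) be a compact metric space containing infinitely many points. There is no homeomorphism f : X → X that is expansive and F_s-expansive; that is, if f : X → X is an expansive homeomorphism, then for every ε > 0 there exist distinct points x, y ∈ X such that N_f(x,y,ε) = {n ∈ ℤ, n ≠ 0 : d(f^n(x), f^n(y)) > ε} is not a syndetic subset of ℤ. -/
/-- For a bijection `f`, `N_f(x,y,δ) = {n ∈ ℤ, n ≠ 0 : d(fⁿ x, fⁿ y) > δ}`. -/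
def zNset {X : Type*} [MetricSpace X] (f : Equiv.Perm X) (x y : X) (δ : ℝ) : Set ℤ :=
  {n : ℤ | n ≠ 0 ∧ δ < dist ((f ^ n) x) ((f ^ n) y)}

/-- `T ⊆ ℤ` is syndetic (for the semigroup `(ℤ,+)`): there is a finite set `K`
such that for every `s ∈ ℤ` some `k ∈ K` has `k + s ∈ T`. -/
def IsSyndeticZ (T : Set ℤ) : Prop :=
  ∃ K : Finset ℤ, ∀ s : ℤ, ∃ k ∈ K, k + s ∈ T

section Expansive

open Filter Uniformity

variable {X : Type*}

lemma continuous_perm_zpow [TopologicalSpace X] {f : Equiv.Perm X} (hf : Continuous ⇑f)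
    (hf' : Continuous ⇑f.symm) (n : ℤ) : Continuous ⇑(f ^ n) := by
  have key : ∀ (g : Equiv.Perm X), Continuous ⇑g → ∀ m : ℕ, Continuous ⇑(g ^ m) := by
    intro g hg m
    rw [Equiv.Perm.coe_pow]
    exact hg.iterate m
  obtain ⟨m, rfl | rfl⟩ := n.eq_nat_or_neg
  · rw [zpow_natCast]
    exact key f hf m
  · rw [zpow_neg, zpow_natCast, ← inv_pow]
    exact key f⁻¹ hf' m

variable [MetricSpace X] [CompactSpace X] {f : Equiv.Perm X} {δ : ℝ}

/-- If staying `δ`-close along all times in `S` forces equality, then staying `δ`-close along a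
bounded part of `S` already forces `ε`-closeness. -/
lemma exists_bound_dist_lt_of_expansive (hf : Continuous ⇑f) (hf' : Continuous ⇑f.symm)
    (S : Set ℤ) (hS : ∀ x y : X, (∀ n ∈ S, dist ((f ^ n) x) ((f ^ n) y) ≤ δ) → x = y)
    {ε : ℝ} (hε : 0 < ε) :
    ∃ N : ℕ, ∀ x y : X, (∀ n ∈ S, |n| ≤ N → dist ((f ^ n) x) ((f ^ n) y) ≤ δ) →
      dist x y < ε := by
  have hcont := continuous_perm_zpow hf hf'
  have hfar : IsCompact {p : X × X | ε ≤ dist p.1 p.2} :=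
    (isClosed_le continuous_const continuous_dist).isCompact
  obtain ⟨F, hF⟩ := hfar.elim_finite_subfamily_closed
    (fun n : S ↦ {p : X × X | dist ((f ^ (n : ℤ)) p.1) ((f ^ (n : ℤ)) p.2) ≤ δ})
    (fun n ↦ isClosed_le
      (((hcont n).comp continuous_fst).dist ((hcont n).comp continuous_snd)) continuous_const)
    (by
      ext ⟨x, y⟩
      simp only [Set.mem_inter_iff, Set.mem_ofPred_eq, Set.mem_iInter, Set.mem_empty_iff_false,
        iff_false, not_and]
      intro hle hclose
      have := hS x y fun n hn ↦ hclose ⟨n, hn⟩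
      subst this
      rw [dist_self] at hle
      linarith)
  refine ⟨F.sup fun n ↦ (n : ℤ).natAbs, fun x y h ↦ ?_⟩
  by_contra! hle
  have hmem : (x, y) ∈ (∅ : Set (X × X)) := by
    rw [← hF]
    refine ⟨hle, Set.mem_iInter₂.2 fun n hn ↦ h n n.2 ?_⟩
    have := Finset.le_sup (f := fun n : S ↦ (n : ℤ).natAbs) hn
    rw [Int.abs_eq_natAbs]
    exact_mod_cast this
  exact hmem

/-- For every `δ > 0`, a homeomorphism of an infinite compact metric space has two
distinct points which stay `δ`-close for all positive times. -/
lemma exists_ne_forall_pos_dist_le [Infinite X] (hf : Continuous ⇑f) (hf' : Continuous ⇑f.symm)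
    (hδ : 0 < δ) :
    ∃ x y : X, x ≠ y ∧ ∀ n : ℤ, 0 < n → dist ((f ^ n) x) ((f ^ n) y) ≤ δ := by
  by_contra! hpos
  have hpos' : ∀ x y : X, (∀ n ∈ Set.Ioi (0 : ℤ), dist ((f ^ n) x) ((f ^ n) y) ≤ δ) → x = y := by
    intro x y h
    by_contra hne
    obtain ⟨n, hn, hlt⟩ := hpos x y hne
    exact absurd (h n hn) hlt.not_ge
  obtain ⟨N, hN⟩ := exists_bound_dist_lt_of_expansive hf hf' _ hpos' hδ
  have hunif : ∀ᶠ p : X × X in 𝓤 X, ∀ n ∈ Finset.Icc (1 : ℤ) N,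
      dist ((f ^ n) p.1) ((f ^ n) p.2) < δ := by
    rw [Filter.eventually_all_finset]
    intro n _
    exact (CompactSpace.uniformContinuous_of_continuous (continuous_perm_zpow hf hf' n))
      (Metric.dist_mem_uniformity hδ)
  obtain ⟨η, hη, hclose⟩ := Metric.mem_uniformity_dist.1 hunif
  -- closeness within `η` propagates to the whole past
  have hback : ∀ x y : X, dist x y < η → ∀ k : ℕ, ∀ n : ℤ, -k < n → n ≤ N →
      dist ((f ^ n) x) ((f ^ n) y) ≤ δ := by
    intro x y hxy k
    induction k with
    | zero => exact fun n h₁ h₂ ↦ (hclose hxy n (Finset.mem_Icc.2 ⟨by omega, h₂⟩)).le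
    | succ k ih =>
      intro n h₁ h₂
      by_cases hn : -(k : ℤ) < n
      · exact ih n hn h₂
      refine (hN _ _ fun m hm hmN ↦ ?_).le
      rw [Set.mem_Ioi] at hm
      rw [abs_of_pos hm] at hmN
      rw [← Equiv.Perm.mul_apply, ← Equiv.Perm.mul_apply, ← zpow_add]
      exact ih _ (by push_cast at *; omega) (by omega)
  obtain ⟨t, -, htfin, hcover⟩ :=
    (isCompact_univ (X := X)).finite_cover_balls (half_pos hη)
  have : Finite t := htfin
  have hcenter : ∀ x : X, ∃ c : t, dist x c < η / 2 := by
    intro x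
    obtain ⟨c, hc, hxc⟩ := Set.mem_iUnion₂.1 (hcover (Set.mem_univ x))
    exact ⟨⟨c, hc⟩, hxc⟩
  choose c hc using hcenter
  -- a finite set of points with more elements than centers
  obtain ⟨s, hs⟩ := Infinite.exists_subset_card_eq X (Nat.card t + 1)
  have hpigeon : ∀ k : ℕ, ∃ p : s × s, p.1 ≠ p.2 ∧
      dist ((f ^ (k : ℤ)) (p.1 : X)) ((f ^ (k : ℤ)) (p.2 : X)) < η := by
    intro k
    have hcard : ¬ Function.Injective fun x : s ↦ c ((f ^ (k : ℤ)) (x : X)) := by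
      intro hinj
      have := Nat.card_le_card_of_injective _ hinj
      rw [Nat.card_eq_fintype_card, Fintype.card_coe] at this
      omega
    simp only [Function.Injective, not_forall] at hcard
    obtain ⟨x, y, hxy, hne⟩ := hcard
    refine ⟨(x, y), hne, ?_⟩
    have h₁ := hc ((f ^ (k : ℤ)) (x : X))
    have h₂ := hc ((f ^ (k : ℤ)) (y : X))
    rw [hxy] at h₁
    have := dist_triangle_right ((f ^ (k : ℤ)) (x : X)) ((f ^ (k : ℤ)) (y : X))
      (c ((f ^ (k : ℤ)) (y : X)) : X)
    linarith
  choose p hne hp using hpigeon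
  obtain ⟨q, hq⟩ := Finite.exists_infinite_fiber p
  have hqinf := Set.infinite_coe_iff.1 hq
  obtain ⟨k₀, hk₀, -⟩ := hqinf.exists_gt 0
  refine hne k₀ ?_
  rw [Set.mem_preimage, Set.mem_singleton_iff] at hk₀
  rw [hk₀]
  refine Subtype.ext (hpos' _ _ fun n hn ↦ ?_)
  obtain ⟨k, hk, hnk⟩ := hqinf.exists_gt n.toNat
  rw [Set.mem_preimage, Set.mem_singleton_iff] at hk
  have h := hp k
  rw [hk] at h
  rw [Set.mem_Ioi] at hn
  have := hback _ _ h (k + 1) (n - k) (by push_cast; omega) (by omega)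
  rwa [← Equiv.Perm.mul_apply, ← Equiv.Perm.mul_apply, ← zpow_add, sub_add_cancel] at this

end Expansive

lemma not_isSyndeticZ_of_forall_lt_notMem {T : Set ℤ} {N : ℤ} (h : ∀ n, N < n → n ∉ T) :
    ¬ IsSyndeticZ T := by
  rintro ⟨K, hK⟩
  obtain ⟨b, hb⟩ := K.bddBelow
  obtain ⟨k, hk, hmem⟩ := hK (N + 1 - b)
  have : b ≤ k := hb hk
  exact h _ (by omega) hmem

theorem stmt_13 {X : Type*} [MetricSpace X] [CompactSpace X] [Infinite X]
    (f : Equiv.Perm X) (hf : Continuous ⇑f) (hf' : Continuous ⇑f.symm)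
    (δ : ℝ) (hδ : 0 < δ)
    (hexp : ∀ x y : X, x ≠ y → (zNset f x y δ).Nonempty) :
    ∀ ε > (0 : ℝ), ∃ x y : X, x ≠ y ∧ ¬ IsSyndeticZ (zNset f x y ε) := by
  intro ε hε
  obtain ⟨x, y, hne, hxy⟩ := exists_ne_forall_pos_dist_le hf hf' hδ
  have hS : ∀ x y : X, (∀ n ∈ (Set.univ : Set ℤ), dist ((f ^ n) x) ((f ^ n) y) ≤ δ) → x = y := by
    intro x y h
    by_contra hne
    obtain ⟨n, -, hlt⟩ := hexp x y hne
    exact absurd (h n trivial) hlt.not_ge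
  obtain ⟨N, hN⟩ := exists_bound_dist_lt_of_expansive hf hf' _ hS hε
  refine ⟨x, y, hne, not_isSyndeticZ_of_forall_lt_notMem (N := N) fun n hn hmem ↦ ?_⟩
  refine absurd (hN ((f ^ n) x) ((f ^ n) y) fun m _ hm ↦ ?_) hmem.2.not_gt
  rw [← Equiv.Perm.mul_apply, ← Equiv.Perm.mul_apply, ← zpow_add]
  exact hxy _ (by have := abs_le.1 hm; omega)
end

section
/- Let (X,d) be a compact metric space, f : X → X a homeomorphism, and F a family (an upward hereditary collection) of subsets of ℤ \ {0}. Let X_f = { (x_i)_{i∈ℤ} ∈ X^ℤ : f(x_i) = x_{i+1} for all i ∈ ℤ } be the inverse limit space with metric d̄(x̄, ȳ) = Σ_{i∈ℤ} d(x_i, y_i)/2^{|i|}, and let σ_f : X_f → X_f be the shift homeomorphism σ_f((x_i)_{i∈ℤ}) = (x_{i+1})_{i∈ℤ}. Then f is F-expansive if and only if σ_f is F-expansive. -/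
/-- The inverse limit space `X_f = {(xᵢ)_{i∈ℤ} : f(xᵢ) = x_{i+1}}`. -/
def invLimit {X : Type*} (f : Equiv.Perm X) : Set (ℤ → X) :=
  {x : ℤ → X | ∀ i : ℤ, f (x i) = x (i + 1)}

/-- The metric `d̄(x̄,ȳ) = Σ_{i∈ℤ} d(xᵢ,yᵢ)/2^{|i|}` on the inverse limit space. -/
noncomputable def dbar {X : Type*} [MetricSpace X] (x y : ℤ → X) : ℝ :=
  ∑' i : ℤ, dist (x i) (y i) / 2 ^ i.natAbs

lemma Equiv.Perm.continuous_zpow {X : Type*} [TopologicalSpace X] (f : Equiv.Perm X)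
    (hf : Continuous ⇑f) (hf' : Continuous ⇑f.symm) (n : ℤ) : Continuous ⇑(f ^ n) := by
  cases n with
  | ofNat n =>
    rw [Int.ofNat_eq_natCast, zpow_natCast, ← Equiv.Perm.iterate_eq_pow]
    exact hf.iterate n
  | negSucc n =>
    rw [zpow_negSucc, ← inv_pow, ← Equiv.Perm.iterate_eq_pow]
    exact Continuous.iterate hf' (n + 1)

lemma zpow_apply_mem_invLimit {X : Type*} (f : Equiv.Perm X) (x : X) :
    (fun i : ℤ => (f ^ i) x) ∈ invLimit f := by
  intro i
  simp only [add_comm i 1, zpow_one_add, Equiv.Perm.mul_apply]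

lemma invLimit_apply_add {X : Type*} {f : Equiv.Perm X} {x : ℤ → X} (hx : x ∈ invLimit f)
    (m i : ℤ) : x (i + m) = (f ^ i) (x m) := by
  induction i using Int.induction_on with
  | zero => simp
  | succ k ih =>
    rw [add_right_comm, ← hx, ih, add_comm (k : ℤ) 1, zpow_one_add, Equiv.Perm.mul_apply]
  | pred k ih =>
    apply f.injective
    rw [hx, ← Equiv.Perm.mul_apply, ← zpow_one_add]
    convert ih using 2
    · ring
    · congr 1
      ring

lemma summable_const_div_two_pow_natAbs (C : ℝ) :
    Summable fun i : ℤ => C / 2 ^ i.natAbs := by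
  have h : Summable fun n : ℕ => C / 2 ^ n := by
    simpa [div_eq_mul_inv] using summable_geometric_two.mul_left C
  exact Summable.of_nat_of_neg (by simpa using h) (by simpa using h)

lemma dist_div_two_pow_le {X : Type*} [MetricSpace X] [CompactSpace X] (x y : X) (n : ℕ) :
    dist x y / 2 ^ n ≤ Metric.diam (Set.univ : Set X) / 2 ^ n := by
  gcongr
  exact Metric.dist_le_diam_of_mem isCompact_univ.isBounded (Set.mem_univ _) (Set.mem_univ _)

lemma dist_le_dbar {X : Type*} [MetricSpace X] [CompactSpace X] (x y : ℤ → X) :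
    dist (x 0) (y 0) ≤ dbar x y := by
  have hs : Summable fun i : ℤ => dist (x i) (y i) / 2 ^ i.natAbs :=
    (summable_const_div_two_pow_natAbs _).of_nonneg_of_le (fun _ => by positivity)
      fun _ => dist_div_two_pow_le _ _ _
  simpa [dbar] using hs.le_tsum 0 fun _ _ => by positivity

lemma continuous_dbar_orbit {X : Type*} [MetricSpace X] [CompactSpace X] (f : Equiv.Perm X)
    (hf : Continuous ⇑f) (hf' : Continuous ⇑f.symm) :
    Continuous fun p : X × X => dbar (fun i => (f ^ i) p.1) (fun i => (f ^ i) p.2) := by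
  unfold dbar
  refine continuous_tsum (fun i => ?_)
    (summable_const_div_two_pow_natAbs (Metric.diam (Set.univ : Set X))) fun i p => ?_
  · have := f.continuous_zpow hf hf' i
    fun_prop
  · rw [Real.norm_of_nonneg (by positivity)]
    exact dist_div_two_pow_le _ _ _

/-- Points that are close in `X` have orbits that are close for `dbar`. -/
lemma exists_forall_dist_lt_dbar_orbit_lt {X : Type*} [MetricSpace X] [CompactSpace X]
    (f : Equiv.Perm X) (hf : Continuous ⇑f) (hf' : Continuous ⇑f.symm) {δ : ℝ} (hδ : 0 < δ) :
    ∃ ε > 0, ∀ u v : X, dist u v < ε →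
      dbar (fun i => (f ^ i) u) (fun i => (f ^ i) v) < δ := by
  obtain ⟨ε, hε, h⟩ := Metric.uniformContinuous_iff.1
    (CompactSpace.uniformContinuous_of_continuous (continuous_dbar_orbit f hf hf')) δ hδ
  refine ⟨ε, hε, fun u v huv => ?_⟩
  have hd := h (a := (u, v)) (b := (v, v)) (by simpa [Prod.dist_eq, hε] using huv)
  have h0 : dbar (fun i => (f ^ i) v) (fun i => (f ^ i) v) = 0 := by simp [dbar]
  rw [h0, Real.dist_eq, sub_zero] at hd
  exact (le_abs_self _).trans_lt hd

/-- `f` is `F`-expansive iff the shift `σ_f` on the inverse limit space `X_f` is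
`F`-expansive.  The `n`-th iterate (`n ∈ ℤ`) of the shift `σ_f((xᵢ)) = (x_{i+1})`
on `X_f` is `x ↦ (i ↦ x (i + n))`. -/
theorem stmt_14 {X : Type*} [MetricSpace X] [CompactSpace X]
    (f : Equiv.Perm X) (hf : Continuous ⇑f) (hf' : Continuous ⇑f.symm)
    (F : Set (Set ℤ))
    (hF : ∀ B ∈ F, ∀ C : Set ℤ, B ⊆ C → C ⊆ {n : ℤ | n ≠ 0} → C ∈ F) :
    (∃ δ > (0 : ℝ), ∀ x y : X, x ≠ y → zNset f x y δ ∈ F) ↔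
      (∃ δ > (0 : ℝ), ∀ x y : ℤ → X, x ∈ invLimit f → y ∈ invLimit f → x ≠ y →
        {n : ℤ | n ≠ 0 ∧
          δ < dbar (fun i => x (i + n)) (fun i => y (i + n))} ∈ F) := by
  constructor
  · rintro ⟨δ, hδ, h⟩
    refine ⟨δ, hδ, fun x y hx hy hxy => ?_⟩
    have h0 : x 0 ≠ y 0 := fun h0 => hxy <| funext fun i => by
      simpa using
        (invLimit_apply_add hx 0 i).trans ((congrArg _ h0).trans (invLimit_apply_add hy 0 i).symm)
    refine hF _ (h _ _ h0) _ (fun n hn => ⟨hn.1, hn.2.trans_le ?_⟩) fun n hn => hn.1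
    rw [← invLimit_apply_add hx, ← invLimit_apply_add hy, add_zero]
    simpa using dist_le_dbar (fun i => x (i + n)) (fun i => y (i + n))
  · rintro ⟨δ, hδ, h⟩
    obtain ⟨ε, hε, hclose⟩ := exists_forall_dist_lt_dbar_orbit_lt f hf hf' hδ
    refine ⟨ε / 2, half_pos hε, fun x y hxy => ?_⟩
    refine hF _ (h _ _ (zpow_apply_mem_invLimit f x) (zpow_apply_mem_invLimit f y)
      fun he => hxy (by simpa using congrFun he 0)) _ (fun n hn => ⟨hn.1, ?_⟩) fun n hn => hn.1
    by_contra! hle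
    have hlt := hclose _ _ (hle.trans_lt (half_lt_self hε))
    simp only [← Equiv.Perm.mul_apply, ← zpow_add] at hlt
    exact hlt.not_gt hn.2
end
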